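/- Let k be an algebraically closed field, 1 ≤ d ≤ n, and u, v ∈ I^{Sp}_{d,2n} with u ≥^{Sp} v. Let F_1, …, F_r be distinct type C standard monomials on R(u,v) and c_1, …, c_r ∈ k. If Σ_{i=1}^r c_i F_i(M) = 0 for every 2n×d matrix M over k of rank d whose column span lies in the Richardson variety R(u,v), then Σ_{i=1}^r c_i F_i(M) = 0 for every 2n×d matrix M over k of rank d; equivalently, all c_i = 0. -/

import Mathlib

/-!
The upper bounds `dim (U ∩ K_{σ(v_t)}) ≤ t - 1` in `inRich` are open conditions, so for `u ≥ v` the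
whole Schubert cell `B e_u` is contained in the variety (`spCell_inRich`), and it is enough to show
that monomials `p_{w_1} ⋯ p_{w_m}` with `u ≥ w_1 ≥ ⋯ ≥ w_m` are linearly independent on this cell.

Three facts give this. On the cell of `τ`, the coordinate `p_σ` vanishes unless `σ ≤ τ`
(`pluckerT_eq_zero`), and `p_τ` vanishes nowhere (`pluckerT_self_ne_zero`). If `τ ≤ u`, a polynomial
function that vanishes on the cell of `u` vanishes on the cell of `τ` (`vanish_le`): by
`exists_reflPos` one can pass from `u` to `τ` through a descending sequence of reflections, and for
each of them a root subgroup of `B` supplies a curve in the larger cell that tends to a given point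
of the smaller one (`vanish_refl`).

Given a vanishing combination with nonzero coefficients, choose a leading factor `τ = w_1` of least
total position. On the cell of `τ` only the monomials starting with `τ` survive, and cancelling
`p_τ` leaves a shorter relation on that cell (`eq_empty_of_vanish`). The empty monomial, which may
appear after cancelling since the degrees are not assumed equal, is excluded by rescaling a column
(`const_eq_zero`).
-/


open Matrix BigOperators

/-- The standard symplectic matrix `J = [[0, -Iₙ],[Iₙ, 0]]` of size `2n × 2n`. -/
def Jmat (k : Type*) [Field k] (n : ℕ) : Matrix (Fin (2*n)) (Fin (2*n)) k :=
  Matrix.of fun a b => if a.1 + n = b.1 then (-1 : k) else if b.1 + n = a.1 then 1 else 0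

/-- A subspace `U ⊆ k^{2n}` is isotropic if `uᵀ J w = 0` for all `u, w ∈ U`. -/
def IsIsotropic (k : Type*) [Field k] (n : ℕ) (U : Submodule k (Fin (2*n) → k)) : Prop :=
  ∀ u ∈ U, ∀ w ∈ U, u ⬝ᵥ (Jmat k n).mulVec w = 0

/-- `Kspace k n a` is the subspace `K_a` (with `a` a 1-indexed index in `{0,…,2n}`):
`K_0 = 0`, `K_a = span(e_1,…,e_a)` for `1 ≤ a ≤ n`, and
`K_{n+i} = span(e_1,…,e_n, e_{n+i},…,e_{2n})` for `1 ≤ i ≤ n`. -/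
def Kspace (k : Type*) [Field k] (n : ℕ) (a : ℕ) : Submodule k (Fin (2*n) → k) :=
  Submodule.span k
    {v | ∃ p : Fin (2*n), ((p.1 < a ∧ p.1 < n) ∨ (n < a ∧ a ≤ p.1 + 1)) ∧ v = Pi.single p 1}

/-- `σ` on 1-indexed `{1,…,2n}`: `σ(a) = a-1` for `a ≤ n`, `σ(a) = a+1` for `n < a < 2n`,
`σ(2n) = n`. -/
def sigmaFn (n a : ℕ) : ℕ := if a ≤ n then a - 1 else if a < 2*n then a + 1 else n

/-- Membership in `\overline{I}^{Sp}_{d,2n}` (0-indexed entries): a `d`-tuple of pairwise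
distinct elements of `Fin (2n)` such that for some `r ≤ d`, the first `r` entries are
strictly increasing with (1-indexed) values `≤ n` and the remaining entries are strictly
decreasing with (1-indexed) values `> n`. -/
def IsSpBarTuple (n : ℕ) {d : ℕ} (i : Fin d → Fin (2*n)) : Prop :=
  Function.Injective i ∧ ∃ r ≤ d,
    (∀ a b : Fin d, a < b → b.1 < r → i a < i b) ∧
    (∀ a : Fin d, a.1 < r → (i a).1 < n) ∧
    (∀ a b : Fin d, a < b → r ≤ a.1 → i b < i a) ∧
    (∀ a : Fin d, r ≤ a.1 → n ≤ (i a).1)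

/-- Membership in `I^{Sp}_{d,2n}`: a tuple of `\overline{I}^{Sp}_{d,2n}` whose entries
contain no pair `{t, n+t}`. -/
def IsSpTuple (n : ℕ) {d : ℕ} (i : Fin d → Fin (2*n)) : Prop :=
  IsSpBarTuple n i ∧ ∀ a b : Fin d, (i b).1 ≠ (i a).1 + n

/-- The order `i ≥^{Sp} j`: for every `t`, `i_t ≥ j_t` if `j_t ≤ n` (1-indexed), and
`n < i_t ≤ j_t` if `j_t > n`. -/
def spGE (n : ℕ) {d : ℕ} (i j : Fin d → Fin (2*n)) : Prop :=
  ∀ t : Fin d, if (j t).1 < n then j t ≤ i t else (n ≤ (i t).1 ∧ i t ≤ j t)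

/-- The coordinate subspace `e_i = span(e_{i_1},…,e_{i_d})`. -/
def eSpan (k : Type*) [Field k] {n d : ℕ} (i : Fin d → Fin (2*n)) :
    Submodule k (Fin (2*n) → k) :=
  Submodule.span k (Set.range fun t => Pi.single (i t) (1 : k))

/-- The Borel subgroup `B` of `Sp_{2n}(k)`: symplectic matrices of block form
`[[A, B'],[0, D]]` with `A` upper triangular. -/
def inB (k : Type*) [Field k] (n : ℕ) (M : Matrix (Fin (2*n)) (Fin (2*n)) k) : Prop :=
  Mᵀ * Jmat k n * M = Jmat k n ∧
  ∀ a b : Fin (2*n), ((n ≤ a.1 ∧ b.1 < n) ∨ (a.1 < n ∧ b.1 < n ∧ b.1 < a.1)) → M a b = 0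

/-- The opposite Borel subgroup `B⁻` of `Sp_{2n}(k)`: symplectic matrices of block form
`[[A, 0],[C, D]]` with `A` lower triangular. -/
def inBminus (k : Type*) [Field k] (n : ℕ) (M : Matrix (Fin (2*n)) (Fin (2*n)) k) : Prop :=
  Mᵀ * Jmat k n * M = Jmat k n ∧
  ∀ a b : Fin (2*n), ((a.1 < n ∧ n ≤ b.1) ∨ (a.1 < n ∧ b.1 < n ∧ a.1 < b.1)) → M a b = 0

/-- The Plücker coordinate `p_S(M)`: determinant of the `d×d` submatrix of `M` formed by
the rows in `S` taken in increasing order (and `0` if `S` does not have `d` elements). -/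
def pluckerS {k : Type*} [Field k] {n d : ℕ} (M : Matrix (Fin (2*n)) (Fin d) k)
    (S : Finset (Fin (2*n))) : k :=
  if hS : S.card = d then
    (M.submatrix (fun a => (S.orderIsoOfFin hS a : Fin (2*n))) id).det
  else 0

/-- The Plücker coordinate attached to the underlying set of a tuple `j`. -/
def pluckerT {k : Type*} [Field k] {n d : ℕ} (M : Matrix (Fin (2*n)) (Fin d) k)
    (j : Fin d → Fin (2*n)) : k :=
  pluckerS M (Finset.image j Finset.univ)

/-- The row-selection function for `R(i,t)`: rows `i_1, …, i_{d-2}, t, n+t` in order. -/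
def rowsFn {n : ℕ} (d : ℕ) (i : Fin (d-2) → Fin (2*n)) (t : Fin n) : Fin d → Fin (2*n) :=
  fun l =>
    if h : l.1 < d - 2 then i ⟨l.1, h⟩
    else if l.1 = d - 2 then ⟨t.1, by have := t.2; omega⟩
    else ⟨n + t.1, by have := t.2; omega⟩

/-- The column-selection function enumerating, in increasing order, the columns of a
`2n × d` matrix other than `j1 < j2`. -/
def colSkip (d : ℕ) (j1 j2 : Fin d) (c : Fin (d-2)) : Fin d :=
  if c.1 < j1.1 then ⟨c.1, by have := c.2; omega⟩
  else if c.1 + 1 < j2.1 then ⟨c.1 + 1, by have := c.2; omega⟩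
  else ⟨c.1 + 2, by have := c.2; omega⟩

/-- Membership of a subspace `U` in the Richardson variety `R(u,v)` of `Sp_{2n}(k)/P_d`:
`U` is a `d`-dimensional isotropic subspace with `dim(U ∩ K_{u_t}) ≥ t` and
`dim(U ∩ K_{σ(v_t)}) ≤ t-1` for all `1 ≤ t ≤ d`. -/
def inRich (k : Type*) [Field k] (n : ℕ) {d : ℕ} (u v : Fin d → Fin (2*n))
    (U : Submodule k (Fin (2*n) → k)) : Prop :=
  IsIsotropic k n U ∧ Module.finrank k U = d ∧
  ∀ t : Fin d,
    t.1 + 1 ≤ Module.finrank k ↥(U ⊓ Kspace k n ((u t).1 + 1)) ∧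
    Module.finrank k ↥(U ⊓ Kspace k n (sigmaFn n ((v t).1 + 1))) ≤ t.1

/-- The monomial `M ↦ p_{S(w_1)}(M) ⋯ p_{S(w_m)}(M)` attached to a list
`L = [w_1, …, w_m]` of tuples. -/
def stdMonL {k : Type*} [Field k] {n d : ℕ} (L : List (Fin d → Fin (2*n)))
    (M : Matrix (Fin (2*n)) (Fin d) k) : k :=
  (L.map (pluckerT M)).prod

/-- `L = [w_1, …, w_m]` indexes a type C standard monomial on the Richardson variety
`R(u,v)`: `m ≥ 1`, all `w_l ∈ I^{Sp}_{d,2n}`, and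
`u ≥^{Sp} w_1 ≥^{Sp} … ≥^{Sp} w_m ≥^{Sp} v`. -/
def IsStdOnR (n : ℕ) {d : ℕ} (u v : Fin d → Fin (2*n))
    (L : List (Fin d → Fin (2*n))) : Prop :=
  L ≠ [] ∧ (∀ w ∈ L, IsSpTuple n w) ∧ List.Chain' (spGE n) (u :: (L ++ [v]))

/-! ### The position order on row indices -/

/-- The position (from `0`) of a row index in the order `1 < ⋯ < n < 2n < ⋯ < n+1`, for which
`spGE` is the entrywise comparison and the `Kspace`s are the initial coordinate subspaces. -/
def spPos (n : ℕ) (p : Fin (2*n)) : ℕ := if p.1 < n then p.1 else 3*n-1-p.1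

/-- The row index at position `x`. -/
def ofPos (n x : ℕ) (hx : x < 2*n) : Fin (2*n) :=
  ⟨if x < n then x else 3*n-1-x, by split_ifs <;> omega⟩

/-- The dual index, `t ↔ n + t`; it reverses the position order. -/
def spBar (n : ℕ) (p : Fin (2*n)) : Fin (2*n) :=
  ⟨if p.1 < n then p.1 + n else p.1 - n, by have := p.2; split_ifs <;> omega⟩

lemma spPos_lt {n : ℕ} (p : Fin (2*n)) : spPos n p < 2*n := by
  have := p.2
  unfold spPos; split_ifs <;> omega

lemma spPos_inj {n : ℕ} {p q : Fin (2*n)} : spPos n p = spPos n q ↔ p = q := by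
  refine ⟨fun h => ?_, fun h => h ▸ rfl⟩
  have := p.2
  have := q.2
  unfold spPos at h
  apply Fin.ext
  split_ifs at h <;> omega

lemma spPos_ofPos {n x : ℕ} (hx : x < 2*n) : spPos n (ofPos n x hx) = x := by
  unfold spPos ofPos
  dsimp only
  split_ifs <;> omega

lemma spPos_bar {n : ℕ} (p : Fin (2*n)) : spPos n (spBar n p) + spPos n p = 2*n-1 := by
  have := p.2
  unfold spPos spBar
  dsimp only
  split_ifs <;> omega

lemma eq_bar_iff {n : ℕ} {p q : Fin (2*n)} : q = spBar n p ↔ spPos n p + spPos n q = 2*n-1 := by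
  have := spPos_bar p
  have := spPos_lt p
  have := spPos_lt q
  rw [← spPos_inj]
  omega

lemma spGE_iff {n d : ℕ} {i j : Fin d → Fin (2*n)} :
    spGE n i j ↔ ∀ t, spPos n (j t) ≤ spPos n (i t) := by
  refine forall_congr' fun t => ?_
  have := (i t).2
  have := (j t).2
  unfold spPos
  simp only [Fin.le_def]
  split_ifs <;> omega

/-- The sign of the nonzero entry of `J` in a given row. -/
def spSgn (k : Type*) [Field k] (n : ℕ) (p : Fin (2*n)) : k := if p.1 < n then -1 else 1

lemma Jmat_apply {k : Type*} [Field k] {n : ℕ} (p q : Fin (2*n)) :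
    Jmat k n p q = if spPos n p + spPos n q = 2*n-1 then spSgn k n p else 0 := by
  have := p.2
  have := q.2
  unfold Jmat spSgn spPos
  simp only [Matrix.of_apply]
  split_ifs <;> first | rfl | omega

lemma spSgn_mul_self {k : Type*} [Field k] {n : ℕ} (p : Fin (2*n)) :
    spSgn k n p * spSgn k n p = 1 := by
  unfold spSgn; split_ifs <;> simp

lemma spSgn_of_dual {k : Type*} [Field k] {n : ℕ} {p q : Fin (2*n)}
    (h : spPos n p + spPos n q = 2*n-1) : spSgn k n q = - spSgn k n p := by
  have := p.2
  have := q.2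
  unfold spPos at h
  unfold spSgn
  split_ifs at h ⊢ <;> first | omega | simp

/-- `i` lists a set without dual pairs, increasingly in the position order. -/
structure SpAdm (n : ℕ) {d : ℕ} (i : Fin d → Fin (2*n)) : Prop where
  mono : StrictMono fun t => spPos n (i t)
  noPair : ∀ a b, spPos n (i a) + spPos n (i b) ≠ 2*n-1

lemma IsSpTuple.adm {n d : ℕ} {i : Fin d → Fin (2*n)} (h : IsSpTuple n i) : SpAdm n i := by
  obtain ⟨⟨-, r, -, h1, h2, h3, h4⟩, h5⟩ := h
  constructor
  · intro a b hab
    have hab' : a.1 < b.1 := hab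
    have := (i a).2
    have := (i b).2
    have e1 := h1 a b hab
    have e2 := h3 a b hab
    simp only [Fin.lt_def] at e1 e2
    have := h2 a
    have := h2 b
    have := h4 a
    have := h4 b
    dsimp only
    unfold spPos
    split_ifs <;> omega
  · intro a b hab
    have := (i a).2
    have := (i b).2
    have := h5 a b
    have := h5 b a
    unfold spPos at hab
    split_ifs at hab <;> omega

/-! ### A combinatorial descent step -/

/-- Applying to a set of positions (listed by `U`) the reflection that exchanges `U t` with `x`
and their dual positions with each other. -/
def reflPos (n : ℕ) {d : ℕ} (U : Fin d → ℕ) (t : Fin d) (x : ℕ) (s : Fin d) : ℕ :=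
  if s = t then x else if U s + x = 2*n-1 then 2*n-1-U t else U s

/-- If `W < U` entrywise, some reflection lowers `U`, keeps its entries in increasing order and
stays above `W`. At the first index `t` where `W` and `U` differ, `U t` can be lowered to any
`x ∈ [W t, U t)` whose dual does not occur in `U` at another index. If there is no such `x`, the reflection in
`x = U t - 1` works, because the dual entry of `U` is then larger than that of `W`. -/
lemma exists_reflPos {n d : ℕ} {U W : Fin d → ℕ} (hU : StrictMono U) (hW : StrictMono W)
    (hU2 : ∀ a, U a < 2*n) (hUp : ∀ a b, U a + U b ≠ 2*n-1) (hWp : ∀ a b, W a + W b ≠ 2*n-1)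
    (hle : ∀ a, W a ≤ U a) (hne : W ≠ U) :
    ∃ t x, x < U t ∧ StrictMono (reflPos n U t x) ∧ ∀ a, W a ≤ reflPos n U t x a := by
  obtain ⟨t, ht, hmin⟩ : ∃ t, W t ≠ U t ∧ ∀ s < t, W s = U s := by
    obtain ⟨t0, ht0⟩ := Function.ne_iff.mp hne
    have hS : (Finset.univ.filter fun t => W t ≠ U t).Nonempty := ⟨t0, by simpa using ht0⟩
    refine ⟨_, (Finset.mem_filter.mp (Finset.min'_mem _ hS)).2, fun s hs => ?_⟩
    by_contra h
    exact absurd (Finset.min'_le _ s (by simpa using h)) (not_le.mpr hs)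
  have hlt : W t < U t := lt_of_le_of_ne (hle t) ht
  by_cases hx : ∃ x, W t ≤ x ∧ x < U t ∧ ∀ s, U s + x = 2*n-1 → s = t
  · obtain ⟨x, hx1, hx2, hx3⟩ := hx
    have key : ∀ s, reflPos n U t x s = if s = t then x else U s := by
      intro s
      unfold reflPos
      split_ifs with h1 h2
      · rfl
      · exact absurd (hx3 s h2) h1
      · rfl
    refine ⟨t, x, hx2, fun a b hab => ?_, fun a => ?_⟩
    · rw [key, key]
      have hUab := hU hab
      have hWab := hW hab
      split_ifs with h1 h2 h2
      · subst h1; subst h2; exact absurd hab (lt_irrefl _)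
      · subst h1; omega
      · subst h2; have := hmin a hab; omega
      · exact hUab
    · rw [key]
      split_ifs with h1
      · subst h1; exact hx1
      · exact hle a
  · push Not at hx
    -- the duals of all positions in `[W t, U t)` occur in `U`, beyond the index `t`
    have hdual : ∀ x, W t ≤ x → x < U t → ∃ s, t < s ∧ U s + x = 2*n-1 := by
      obtain ⟨s0, h01, h02⟩ := hx (W t) le_rfl hlt
      have hs0 : t < s0 := by
        rcases lt_trichotomy s0 t with h | h | h
        · exact absurd (by rw [hmin s0 h]; exact h01) (hWp s0 t)
        · exact absurd h h02
        · exact h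
      have := hU hs0
      intro x hx1 hx2
      obtain ⟨s, hs1, hs2⟩ := hx x hx1 hx2
      refine ⟨s, ?_, hs1⟩
      rcases lt_trichotomy s t with h | h | h
      · have := hU h
        have := hW h
        have := hmin s h
        omega
      · exact absurd h hs2
      · exact h
    -- at these duals `W` and `U` differ: agreement at the dual of `x` would force agreement at the
    -- next dual, and finally put both `W t` and its dual into `W`
    have hne' : ∀ j x, x = W t + j → x < U t → ∀ s, U s + x = 2*n-1 → W s ≠ U s := by
      intro j
      induction j with
      | zero =>
        intro x hxj _ s hs h
        apply hWp s t
        rw [h]; omega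
      | succ j ih =>
        intro x hxj hxU s hs h
        obtain ⟨s', -, hs'⟩ := hdual (x-1) (by omega) (by omega)
        apply ih (x-1) (by omega) (by omega) s' hs'
        have hss : s < s' := by
          rw [← hU.lt_iff_lt]; omega
        have := hW hss
        have := hle s'
        omega
    obtain ⟨s', hts, hs'⟩ := hdual (U t - 1) (by omega) (by omega)
    have hWs := hne' (U t - 1 - W t) (U t - 1) (by omega) (by omega) s' hs'
    have hWs2 := hle s'
    have hU2t := hU2 t
    have key : ∀ s, reflPos n U t (U t - 1) s =
        if s = t then U t - 1 else if s = s' then 2*n-1-U t else U s := by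
      intro s
      unfold reflPos
      by_cases h : s = s'
      · subst h; simp [hs']
      · have : ¬ (U s + (U t - 1) = 2*n-1) := by
          intro h'
          exact h (hU.injective (by omega))
        simp [h, this]
    refine ⟨t, U t - 1, by omega, fun a b hab => ?_, fun a => ?_⟩
    · rw [key, key]
      have hUab := hU hab
      have hWab := hW hab
      have hne1 := hUp a t
      have hne2 := hUp t t
      have hlow := hmin a
      by_cases h1 : a = t <;> by_cases h2 : b = t <;> by_cases h3 : a = s' <;>
        by_cases h4 : b = s' <;> simp only [h1, h2, h3, h4, if_true, if_false] <;>
        simp only [h1, h2, h3, h4] at * <;>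
        first
          | omega
          | exact absurd hab (lt_irrefl _)
          | exact absurd hts (lt_irrefl _)
          | exact absurd hab (not_lt.mpr hts.le)
          | (rw [if_neg hts.ne']; omega)
    · rw [key]
      have := hle a
      split_ifs with h1 h2
      · subst h1; omega
      · subst h2; omega
      · exact this

/-! ### Unipotent symplectic matrices and the cells -/

/-- The unipotent radical of the Borel subgroup: symplectic matrices that are unitriangular for
the position order. The symplectic condition is stated on pairs of columns. -/
structure IsUnipSp {k : Type*} [Field k] {n : ℕ} (g : Matrix (Fin (2*n)) (Fin (2*n)) k) :
    Prop where
  symp : ∀ p q, gᵀ p ⬝ᵥ (Jmat k n).mulVec (gᵀ q) = Jmat k n p q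
  diag : ∀ p, g p p = 1
  tri : ∀ i p, spPos n p < spPos n i → g i p = 0

/-- The `2n × d` matrices whose column span lies in the Schubert cell `B e_u`. -/
def spCell (k : Type*) [Field k] {n d : ℕ} (u : Fin d → Fin (2*n)) :
    Set (Matrix (Fin (2*n)) (Fin d) k) :=
  {M | ∃ (g : Matrix (Fin (2*n)) (Fin (2*n)) k) (h : Matrix (Fin d) (Fin d) k),
    IsUnipSp g ∧ h.det ≠ 0 ∧ M = g.submatrix id u * h}

/-- Right multiplication by a root subgroup element: for `x` before `b`, add `c` times column
`x` to column `b` and, unless `x` and `b` are dual, add the multiple of column `b̄` to column `x̄`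
that keeps the matrix symplectic. -/
def addRoot {k : Type*} [Field k] {n : ℕ} (g : Matrix (Fin (2*n)) (Fin (2*n)) k)
    (x b : Fin (2*n)) (c : k) : Matrix (Fin (2*n)) (Fin (2*n)) k :=
  Matrix.of fun i p =>
    g i p + if p = b then c * g i x
      else if p = spBar n x then -(spSgn k n x * spSgn k n b) * c * g i (spBar n b) else 0

lemma IsUnipSp.addRoot {k : Type*} [Field k] {n : ℕ} {g : Matrix (Fin (2*n)) (Fin (2*n)) k}
    (hg : IsUnipSp g) {x b : Fin (2*n)} (hxb : spPos n x < spPos n b) (c : k) :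
    IsUnipSp (addRoot g x b c) := by
  have hbx := spPos_bar x
  have hbb := spPos_bar b
  have lx := spPos_lt x
  have lb := spPos_lt b
  obtain ⟨m, co, hm, hco⟩ : ∃ (m : Fin (2*n) → Fin (2*n)) (co : Fin (2*n) → k),
      (∀ p, m p = if p = b then x else spBar n b) ∧
      (∀ p, co p = if p = b then c else if p = spBar n x then
        -(spSgn k n x * spSgn k n b) * c else 0) := ⟨_, _, fun _ => rfl, fun _ => rfl⟩
  have hcol : ∀ i p, _root_.addRoot g x b c i p = g i p + co p * g i (m p) := by
    intro i p
    rw [hm, hco]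
    unfold _root_.addRoot
    simp only [Matrix.of_apply]
    split_ifs <;> simp
  have hm_lt : ∀ p, co p ≠ 0 → spPos n (m p) < spPos n p := by
    intro p hp
    rw [hco] at hp
    rw [hm]
    split_ifs at hp ⊢ with h1 h2
    · rw [h1]; exact hxb
    · rw [h2]; omega
    · exact absurd rfl hp
  refine ⟨fun p q => ?_, fun p => ?_, fun i p hip => ?_⟩
  · have hT : ∀ p, (_root_.addRoot g x b c)ᵀ p = gᵀ p + co p • gᵀ (m p) := by
      intro p; ext i
      simp [hcol, Matrix.transpose_apply]
    rw [hT, hT]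
    simp only [Matrix.mulVec_add, Matrix.mulVec_smul, dotProduct_add, add_dotProduct,
      smul_dotProduct, dotProduct_smul, hg.symp, smul_eq_mul]
    -- the added columns `g_x`, `g_b̄` are orthogonal to each other, so there is no quadratic term
    have hz : Jmat k n (m p) (m q) = 0 := by
      rw [Jmat_apply, if_neg]
      rw [hm, hm]
      split_ifs <;> omega
    -- the linear terms cancel because of the sign in `addRoot`
    have hz2 : co q * Jmat k n p (m q) + co p * Jmat k n (m p) q = 0 := by
      rw [hco, hco, hm, hm, Jmat_apply, Jmat_apply]
      have e1 : ∀ p, p = spBar n x ↔ spPos n p + spPos n x = 2*n-1 := fun p => by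
        rw [eq_bar_iff, add_comm]
      have sxx := spSgn_mul_self (k := k) x
      have sbb := spSgn_mul_self (k := k) b
      have dx := spSgn_of_dual (k := k) (p := x) (q := spBar n x) (by omega)
      have db := spSgn_of_dual (k := k) (p := b) (q := spBar n b) (by omega)
      by_cases hp : p = b <;> by_cases hq : q = b
      · subst hp; subst hq
        simp only [if_true]
        by_cases hd : spPos n q + spPos n x = 2*n-1
        · rw [if_pos hd, if_pos (by omega), spSgn_of_dual hd]; ring
        · rw [if_neg hd, if_neg (by omega)]; ring
      · subst hp
        by_cases hq' : q = spBar n x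
        · subst hq'
          simp only [if_true, if_neg hq]
          rw [if_pos (by omega), if_pos (by omega)]
          linear_combination -(spSgn k n x * c) * sbb
        · have := (not_congr (e1 q)).mp hq'
          simp only [if_true, if_neg hq, if_neg hq']
          rw [if_neg (by omega : ¬ spPos n x + spPos n q = 2*n-1)]
          ring
      · subst hq
        by_cases hp' : p = spBar n x
        · subst hp'
          simp only [if_true, if_neg hp]
          rw [if_pos (by omega), if_pos (by omega), dx, db]
          linear_combination (spSgn k n x * c) * sbb
        · have := (not_congr (e1 p)).mp hp'
          simp only [if_true, if_neg hp, if_neg hp']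
          rw [if_neg (by omega : ¬ spPos n p + spPos n x = 2*n-1)]
          ring
      · have hp2 : ¬ spPos n (spBar n b) + spPos n q = 2*n-1 := by
          have := (not_congr spPos_inj).mpr hq
          have := spPos_lt q
          omega
        have hq2 : ¬ spPos n p + spPos n (spBar n b) = 2*n-1 := by
          have := (not_congr spPos_inj).mpr hp
          have := spPos_lt p
          omega
        simp only [if_neg hp, if_neg hq, if_neg hp2, if_neg hq2]
        ring
    rw [hz]
    linear_combination hz2
  · rw [hcol, hg.diag]
    by_cases h : co p = 0
    · simp [h]
    · rw [hg.tri _ _ (hm_lt p h)]; simp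
  · rw [hcol, hg.tri _ _ hip]
    by_cases h : co p = 0
    · simp [h]
    · rw [hg.tri _ _ ((hm_lt p h).trans hip)]; simp

lemma isUnipSp_one {k : Type*} [Field k] {n : ℕ} :
    IsUnipSp (1 : Matrix (Fin (2*n)) (Fin (2*n)) k) := by
  refine ⟨fun p q => ?_, fun p => by simp, fun i p h => ?_⟩
  · have : ∀ p, (1 : Matrix (Fin (2*n)) (Fin (2*n)) k)ᵀ p = Pi.single p 1 := by
      intro p; rw [Matrix.transpose_one]; ext i; simp [Matrix.one_apply, Pi.single_apply, eq_comm]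
    simp [this]
  · rw [Matrix.one_apply_ne]
    rintro rfl
    exact lt_irrefl _ h

/-! ### Functions that are polynomial along lines, and limits of cells -/

/-- `F` restricts to a polynomial function on every affine line. -/
def PolyOnLines {k : Type*} [Field k] {m d : Type*} (F : Matrix m d k → k) : Prop :=
  ∀ M N : Matrix m d k, ∃ P : Polynomial k, ∀ s, P.eval s = F (M + s • N)

lemma PolyOnLines.at_zero {k : Type*} [Field k] [Infinite k] {m d : Type*} {F : Matrix m d k → k}
    (hF : PolyOnLines F) (M N : Matrix m d k) (h : ∀ s : k, s ≠ 0 → F (M + s • N) = 0) : F M = 0 := by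
  obtain ⟨P, hP⟩ := hF M N
  have h0 : P = 0 := by
    apply Polynomial.eq_zero_of_infinite_isRoot
    apply ((Set.finite_singleton (0 : k)).infinite_compl).mono
    intro s hs
    simp only [Set.mem_ofPred_eq, Polynomial.IsRoot.def, hP]
    exact h s hs
  have := hP 0
  simpa [h0] using this.symm

lemma polyOnLines_det {k : Type*} [Field k] {m : Type*} {d : ℕ} (f : Fin d → m) :
    PolyOnLines fun M : Matrix m (Fin d) k => (M.submatrix f id).det := by
  intro M N
  refine ⟨(Matrix.of fun i j => Polynomial.C (M (f i) j) + Polynomial.X * Polynomial.C (N (f i) j) :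
    Matrix (Fin d) (Fin d) (Polynomial k)).det, fun s => ?_⟩
  rw [← Polynomial.coe_evalRingHom, RingHom.map_det]
  congr 1
  ext i j
  simp
  exact mul_comm _ _

lemma polyOnLines_pluckerT {k : Type*} [Field k] {n d : ℕ} (j : Fin d → Fin (2*n)) :
    PolyOnLines fun M : Matrix (Fin (2*n)) (Fin d) k => pluckerT M j := by
  unfold pluckerT pluckerS
  by_cases h : (Finset.image j Finset.univ).card = d
  · simp only [h, dif_pos]
    exact polyOnLines_det _
  · simp only [h, dif_neg, not_false_eq_true]
    exact fun _ _ => ⟨0, fun _ => by simp⟩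

lemma polyOnLines_stdMonL {k : Type*} [Field k] {n d : ℕ} (L : List (Fin d → Fin (2*n))) :
    PolyOnLines fun M : Matrix (Fin (2*n)) (Fin d) k => stdMonL L M := by
  intro M N
  induction L with
  | nil => exact ⟨1, fun s => by simp [stdMonL]⟩
  | cons w L ih =>
    obtain ⟨P, hP⟩ := ih
    obtain ⟨Q, hQ⟩ := polyOnLines_pluckerT (k := k) w M N
    refine ⟨Q * P, fun s => ?_⟩
    rw [Polynomial.eval_mul, hP, hQ]
    simp [stdMonL]

lemma polyOnLines_sum {k : Type*} [Field k] {n d : ℕ} {ι : Type*} (S : Finset ι)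
    (w : ι → List (Fin d → Fin (2*n))) (c : ι → k) :
    PolyOnLines fun M : Matrix (Fin (2*n)) (Fin d) k => ∑ a ∈ S, c a * stdMonL (w a) M := by
  intro M N
  choose P hP using fun a => polyOnLines_stdMonL (k := k) (w a) M N
  refine ⟨∑ a ∈ S, Polynomial.C (c a) * P a, fun s => ?_⟩
  simp [Polynomial.eval_finsetSum, hP]

/-- The cell of the reflected tuple lies in the closure of the cell of `u`: the columns
`s g_b + g_x` and `± s g_x̄ + g_b̄` span, for `s ≠ 0`, the same space as columns of
`addRoot g x b s⁻¹`, and at `s = 0` they are the columns of `g` at the reflected tuple. -/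
lemma vanish_refl {k : Type*} [Field k] [Infinite k] {n d : ℕ} {u u' : Fin d → Fin (2*n)}
    (hu : SpAdm n u) (t : Fin d) (x : Fin (2*n)) (hx : spPos n x < spPos n (u t))
    (hu' : ∀ s, u' s = if s = t then x else if u s = spBar n x then spBar n (u t) else u s)
    {F : Matrix (Fin (2*n)) (Fin d) k → k} (hF : PolyOnLines F)
    (hvan : ∀ M ∈ spCell k u, F M = 0) : ∀ M ∈ spCell k u', F M = 0 := by
  rintro _ ⟨g, h, hg, hh, rfl⟩
  obtain ⟨ε, hε⟩ : ∃ ε : k, ε = -(spSgn k n x * spSgn k n (u t)) := ⟨_, rfl⟩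
  have hεε : ε * ε = 1 := by
    rw [hε]
    linear_combination (spSgn_mul_self (k := k) x) +
      (spSgn k n x * spSgn k n x) * (spSgn_mul_self (k := k) (u t))
  have hε0 : ε ≠ 0 := by rintro rfl; simp at hεε
  have hinj : ∀ s, u s = u t ↔ s = t := fun s =>
    ⟨fun e => hu.mono.injective (congrArg (spPos n) e), fun e => e ▸ rfl⟩
  let D : k → Fin d → k := fun s j => if j = t then s else if u j = spBar n x then ε * s else 1
  let N : Matrix (Fin (2*n)) (Fin d) k :=
    Matrix.of fun i j => if j = t then g i (u t) else
      if u j = spBar n x then ε * g i (u j) else 0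
  apply hF.at_zero _ (N * h)
  intro s hs
  apply hvan
  refine ⟨addRoot g x (u t) s⁻¹, Matrix.diagonal (D s) * h, hg.addRoot hx _, ?_, ?_⟩
  · rw [Matrix.det_mul, Matrix.det_diagonal]
    refine mul_ne_zero (Finset.prod_ne_zero_iff.mpr fun j _ => ?_) hh
    simp only [D]
    split_ifs
    · exact hs
    · exact mul_ne_zero hε0 hs
    · exact one_ne_zero
  · rw [← Matrix.mul_assoc, ← Matrix.smul_mul, ← Matrix.add_mul]
    congr 1
    ext i j
    rw [Matrix.mul_diagonal]
    simp only [Matrix.add_apply, Matrix.submatrix_apply, Matrix.smul_apply, id, smul_eq_mul, hu', N,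
      D, addRoot, Matrix.of_apply, hinj, ← hε]
    by_cases h1 : j = t
    · subst h1
      simp only [if_true]
      field_simp
      ring
    · by_cases h2 : u j = spBar n x
      · simp only [if_neg h1, h2, if_true]
        field_simp
        linear_combination -(g i (spBar n (u t))) * hεε
      · simp only [if_neg h1, if_neg h2]
        ring

/-- If `w ≤ u` then the cell of `w` lies in the closure of the cell of `u`. -/
lemma vanish_le {k : Type*} [Field k] [Infinite k] {n d : ℕ} {w : Fin d → Fin (2*n)}
    (hw : SpAdm n w) {F : Matrix (Fin (2*n)) (Fin d) k → k} (hF : PolyOnLines F) (m : ℕ) :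
    ∀ u : Fin d → Fin (2*n), SpAdm n u → ∑ t, spPos n (u t) = m → spGE n u w →
      (∀ M ∈ spCell k u, F M = 0) → ∀ M ∈ spCell k w, F M = 0 := by
  induction m using Nat.strong_induction_on with
  | _ m ih =>
    intro u hu hm hle hvan
    rw [spGE_iff] at hle
    by_cases hne : (fun t => spPos n (w t)) = fun t => spPos n (u t)
    · have : w = u := funext fun t => spPos_inj.mp (congrFun hne t)
      rw [this]; exact hvan
    obtain ⟨t, x, hx, hmono, hge⟩ := exists_reflPos hu.mono hw.mono (fun a => spPos_lt _)
      hu.noPair hw.noPair hle hne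
    have hut := spPos_lt (u t)
    have hx2 : x < 2*n := by omega
    obtain ⟨X, hX⟩ : ∃ X, spPos n X = x := ⟨_, spPos_ofPos hx2⟩
    subst hX
    obtain ⟨u', hu'⟩ : ∃ u' : Fin d → Fin (2*n), ∀ s, u' s =
      if s = t then X else if u s = spBar n X then spBar n (u t) else u s := ⟨_, fun _ => rfl⟩
    have hpos : ∀ s, spPos n (u' s) = reflPos n (fun t => spPos n (u t)) t (spPos n X) s := by
      intro s
      have := spPos_bar (u t)
      rw [hu']
      unfold reflPos
      simp only [eq_bar_iff, add_comm (spPos n X)]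
      split_ifs <;> omega
    have hle' : ∀ s, spPos n (u' s) ≤ spPos n (u s) := by
      intro s
      rw [hpos]
      unfold reflPos
      split_ifs with h1 h2
      · rw [h1]; exact hx.le
      · dsimp only at hx h2 ⊢; omega
      · exact le_rfl
    have hadm : SpAdm n u' := by
      constructor
      · simpa only [hpos] using hmono
      · intro a b
        have e1 := hu.noPair a b
        have e2 := hu.noPair t b
        have e3 := hu.noPair t a
        have e4 := hu.noPair t t
        have la := spPos_lt (u a)
        have lb := spPos_lt (u b)
        have ia : spPos n (u a) = spPos n (u t) → a = t := fun e => hu.mono.injective e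
        have ib : spPos n (u b) = spPos n (u t) → b = t := fun e => hu.mono.injective e
        rw [hpos, hpos]
        unfold reflPos
        dsimp only at hx ⊢
        split_ifs <;> omega
    refine ih (∑ t, spPos n (u' t)) ?_ u' hadm rfl ?_ (vanish_refl hu t X hx hu' hF hvan)
    · rw [← hm]
      refine Finset.sum_lt_sum (fun s _ => hle' s) ⟨t, Finset.mem_univ _, ?_⟩
      rw [hu', if_pos rfl]; exact hx
    · rw [spGE_iff]
      intro s
      rw [hpos]; exact hge s

/-! ### Cells lie in the Richardson variety -/

/-- Back substitution: a combination of the columns `g_{u_r}` vanishing in the rows `u_s` with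
`s ≥ T` has no terms with index `≥ T`. -/
lemma IsUnipSp.coeff_eq_zero {k : Type*} [Field k] {n d : ℕ} {u : Fin d → Fin (2*n)}
    (hu : SpAdm n u) {g : Matrix (Fin (2*n)) (Fin (2*n)) k} (hg : IsUnipSp g) (a : Fin d → k)
    (T : ℕ) (h : ∀ s : Fin d, T ≤ s.1 → ∑ r, a r * g (u s) (u r) = 0) :
    ∀ s : Fin d, T ≤ s.1 → a s = 0 := by
  by_contra! hcon
  obtain ⟨s, ⟨hsT, hs⟩, hmax⟩ := Set.Finite.exists_maximal
    (Set.toFinite {s : Fin d | T ≤ s.1 ∧ a s ≠ 0}) hcon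
  have := h s hsT
  rw [Finset.sum_eq_single s, hg.diag, mul_one] at this
  · exact hs this
  · intro r _ hr
    rcases lt_or_gt_of_ne hr with h1 | h1
    · rw [hg.tri _ _ (hu.mono h1), mul_zero]
    · by_cases har : a r = 0
      · rw [har, zero_mul]
      · have h2 : s.1 < r.1 := h1
        exact absurd (hmax ⟨by omega, har⟩ h1.le) (not_le.mpr h1)
  · simp

lemma mem_Kspace {k : Type*} [Field k] {n a : ℕ} {y : Fin (2*n) → k} :
    y ∈ Kspace k n a ↔
      ∀ p : Fin (2*n), ¬ ((p.1 < a ∧ p.1 < n) ∨ (n < a ∧ a ≤ p.1 + 1)) → y p = 0 := by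
  constructor
  · intro hy p hp
    induction hy using Submodule.span_induction with
    | mem x hx =>
      obtain ⟨q, hq, rfl⟩ := hx
      rw [Pi.single_eq_of_ne]
      rintro rfl
      exact hp hq
    | zero => rfl
    | add x y _ _ hx hy => rw [Pi.add_apply, hx, hy, add_zero]
    | smul c x _ hx => rw [Pi.smul_apply, hx, smul_zero]
  · intro h
    rw [pi_eq_sum_univ' y]
    refine Submodule.sum_mem _ fun p _ => ?_
    by_cases hp : (p.1 < a ∧ p.1 < n) ∨ (n < a ∧ a ≤ p.1 + 1)
    · apply Submodule.smul_mem
      refine Submodule.subset_span ⟨p, hp, ?_⟩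
      ext q
      simp [Pi.single_apply, eq_comm]
    · rw [h p hp, zero_smul]
      exact Submodule.zero_mem _

lemma mem_Kspace_succ {k : Type*} [Field k] {n : ℕ} (q : Fin (2*n)) {y : Fin (2*n) → k} :
    y ∈ Kspace k n (q.1 + 1) ↔ ∀ p, spPos n q < spPos n p → y p = 0 := by
  rw [mem_Kspace]
  refine forall_congr' fun p => imp_congr_left ?_
  have := p.2
  have := q.2
  unfold spPos
  split_ifs <;> omega

lemma mem_Kspace_sigma {k : Type*} [Field k] {n : ℕ} (q : Fin (2*n)) {y : Fin (2*n) → k} :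
    y ∈ Kspace k n (sigmaFn n (q.1 + 1)) ↔ ∀ p, spPos n q ≤ spPos n p → y p = 0 := by
  rw [mem_Kspace]
  refine forall_congr' fun p => imp_congr_left ?_
  have := p.2
  have := q.2
  unfold spPos sigmaFn
  split_ifs <;> omega

/-- `inRich` bounds the intersection with `K_{σ(v_t)}` from above, an open condition, so it holds
on the whole cell of `u` as soon as `u ≥ v`. -/
lemma spCell_inRich {k : Type*} [Field k] {n d : ℕ} {u v : Fin d → Fin (2*n)} (hu : SpAdm n u)
    (huv : spGE n u v) {M : Matrix (Fin (2*n)) (Fin d) k} (hM : M ∈ spCell k u) :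
    M.rank = d ∧ inRich k n u v (LinearMap.range M.mulVecLin) := by
  obtain ⟨g, h, hg, hh, rfl⟩ := hM
  rw [spGE_iff] at huv
  obtain ⟨A, hA⟩ : ∃ A, A = g.submatrix id u := ⟨_, rfl⟩
  have hcol : ∀ r, A.col r = gᵀ (u r) := by
    intro r; rw [hA]; rfl
  have hrange : LinearMap.range (A * h).mulVecLin = Submodule.span k (Set.range A.col) := by
    rw [Matrix.mulVecLin_mul, LinearMap.range_comp_of_range_eq_top, Matrix.range_mulVecLin]
    rw [LinearMap.range_eq_top]
    intro y
    have hu : IsUnit h.det := isUnit_iff_ne_zero.mpr hh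
    refine ⟨h⁻¹.mulVec y, ?_⟩
    rw [Matrix.mulVecLin_apply, Matrix.mulVec_mulVec, Matrix.mul_nonsing_inv _ hu,
      Matrix.one_mulVec]
  have hli : LinearIndependent k A.col := by
    rw [Fintype.linearIndependent_iff]
    intro a ha s
    refine hg.coeff_eq_zero hu a 0 (fun s _ => ?_) s (Nat.zero_le _)
    have := congrFun ha (u s)
    simpa [hcol, Matrix.transpose_apply] using this
  have hrank : Module.finrank k (Submodule.span k (Set.range A.col)) = d := by
    rw [finrank_span_eq_card hli, Fintype.card_fin]
  rw [← hA, Matrix.rank, hrange]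
  refine ⟨hrank, ?_, hrank, fun t => ⟨?_, ?_⟩⟩
  · intro y hy z hz
    induction hy using Submodule.span_induction with
    | zero => simp
    | add x y _ _ hx hy => rw [add_dotProduct, hx, hy, add_zero]
    | smul c x _ hx => rw [smul_dotProduct, hx, smul_zero]
    | mem x hx =>
      obtain ⟨r, rfl⟩ := hx
      induction hz using Submodule.span_induction with
      | zero => simp
      | add x y _ _ hx hy => rw [Matrix.mulVec_add, dotProduct_add, hx, hy, add_zero]
      | smul c x _ hx => rw [Matrix.mulVec_smul, dotProduct_smul, hx, smul_zero]
      | mem z hz =>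
        obtain ⟨s, rfl⟩ := hz
        rw [hcol, hcol, hg.symp, Jmat_apply, if_neg (hu.noPair r s)]
  · have ht := t.2
    have hli' := hli.comp (Fin.castLE (show t.1 + 1 ≤ d by omega)) (Fin.castLE_injective _)
    have hf := finrank_span_eq_card hli'
    rw [Fintype.card_fin] at hf
    rw [← hf]
    apply Submodule.finrank_mono
    rw [Submodule.span_le]
    rintro _ ⟨r, rfl⟩
    refine ⟨Submodule.subset_span ⟨_, rfl⟩, ?_⟩
    rw [SetLike.mem_coe, mem_Kspace_succ]
    intro p hp
    rw [Function.comp_apply, hcol]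
    refine hg.tri _ _ (lt_of_le_of_lt (hu.mono.monotone ?_) hp)
    rw [Fin.le_def, Fin.val_castLE]
    omega
  · have ht := t.2
    have hcard := finrank_range_le_card (R := k)
      (fun r : Fin t.1 => A.col (Fin.castLE ht.le r))
    rw [Fintype.card_fin] at hcard
    refine le_trans (Submodule.finrank_mono ?_) hcard
    rintro y ⟨hy1, hy2⟩
    obtain ⟨a, rfl⟩ := (Submodule.mem_span_range_iff_exists_fun k).mp hy1
    rw [SetLike.mem_coe, mem_Kspace_sigma] at hy2
    have ha := hg.coeff_eq_zero hu a t.1 (fun s hs => by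
      have := hy2 (u s) ((huv t).trans (hu.mono.monotone hs))
      simpa [hcol, Matrix.transpose_apply] using this)
    refine Submodule.sum_mem _ fun r _ => ?_
    by_cases hr : r.1 < t.1
    · exact Submodule.smul_mem _ _ (Submodule.subset_span ⟨⟨r.1, hr⟩, rfl⟩)
    · rw [ha r (by omega), zero_smul]
      exact Submodule.zero_mem _

/-! ### Plücker coordinates on cells -/

/-- Up to a sign depending on the tuple only, `p_j` is the minor with rows listed by `j`. -/
lemma exists_pluckerT_eq (k : Type*) [Field k] {n d : ℕ} {j : Fin d → Fin (2*n)}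
    (hj : Function.Injective j) : ∃ ε : k, ε ≠ 0 ∧
      ∀ M : Matrix (Fin (2*n)) (Fin d) k, pluckerT M j = ε * (M.submatrix j id).det := by
  have hc : (Finset.image j Finset.univ).card = d := by
    rw [Finset.card_image_of_injective _ hj, Finset.card_fin]
  obtain ⟨f, hf⟩ : ∃ f : Fin d → Fin (2*n), f = fun a =>
    ((Finset.image j Finset.univ).orderIsoOfFin hc a : Fin (2*n)) := ⟨_, rfl⟩
  have hfinj : Function.Injective f := by
    rw [hf]
    exact Subtype.val_injective.comp (OrderIso.injective _)
  have hex : ∀ a, ∃ b, j b = f a := by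
    intro a
    have := ((Finset.image j Finset.univ).orderIsoOfFin hc a).2
    rw [hf]
    obtain ⟨b, -, hb⟩ := Finset.mem_image.mp this
    exact ⟨b, hb⟩
  choose τ hτ using hex
  have hτi : Function.Injective τ := fun a b e => hfinj (by rw [← hτ, ← hτ, e])
  obtain ⟨π, hπ⟩ : ∃ π : Equiv.Perm (Fin d), ∀ a, π a = τ a :=
    ⟨Equiv.ofBijective τ (Finite.injective_iff_bijective.mp hτi), fun _ => rfl⟩
  refine ⟨((Equiv.Perm.sign π : ℤ) : k), ?_, fun M => ?_⟩
  · rcases Int.units_eq_one_or (Equiv.Perm.sign π) with h | h <;> simp [h]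
  · unfold pluckerT pluckerS
    rw [dif_pos hc, ← Matrix.det_permute]
    congr 1
    ext a b
    simp only [Matrix.submatrix_apply, id, hπ, hτ, hf]

/-- A matrix with a zero block large enough to meet the diagonal is singular. -/
lemma det_eq_zero_of_block {k : Type*} [Field k] {d : ℕ} (A : Matrix (Fin d) (Fin d) k) (s : Fin d)
    (h : ∀ a b, s ≤ a → b ≤ s → A a b = 0) : A.det = 0 := by
  rw [Matrix.det_apply]
  refine Finset.sum_eq_zero fun σ _ => ?_
  obtain ⟨b, hb, hσ⟩ : ∃ b ≤ s, s ≤ σ b := by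
    by_contra! hcon
    have := Finset.card_le_card_of_injOn (s := Finset.Iic s) (t := Finset.Iio s) σ
      (fun b hb => by simpa using hcon b (by simpa using hb)) σ.injective.injOn
    simp at this
  rw [Finset.prod_eq_zero (f := fun i => A (σ i) i) (Finset.mem_univ b) (h _ _ hσ hb), smul_zero]

/-- If `τ_s` lies beyond `u_s`, the minor of `g` with rows `τ` and columns `u` has a zero block in
rows `≥ s` and columns `≤ s`. -/
lemma pluckerT_eq_zero {k : Type*} [Field k] {n d : ℕ} {u τ : Fin d → Fin (2*n)}
    (hu : SpAdm n u) (hτ : SpAdm n τ) (h : ¬ spGE n u τ) {M : Matrix (Fin (2*n)) (Fin d) k}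
    (hM : M ∈ spCell k u) : pluckerT M τ = 0 := by
  obtain ⟨g, m, hg, -, rfl⟩ := hM
  obtain ⟨ε, -, hε⟩ := exists_pluckerT_eq k (j := τ)
    (fun a b e => hτ.mono.injective (congrArg (spPos n) e))
  rw [spGE_iff] at h
  push Not at h
  obtain ⟨s, hs⟩ := h
  rw [hε, Matrix.submatrix_mul _ _ τ id id Function.bijective_id, Matrix.det_mul,
    det_eq_zero_of_block _ s, zero_mul, mul_zero]
  intro a b ha hb
  exact hg.tri _ _ (lt_of_le_of_lt (hu.mono.monotone hb) (lt_of_lt_of_le hs (hτ.mono.monotone ha)))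

lemma pluckerT_self_ne_zero {k : Type*} [Field k] {n d : ℕ} {u : Fin d → Fin (2*n)}
    (hu : SpAdm n u) {M : Matrix (Fin (2*n)) (Fin d) k} (hM : M ∈ spCell k u) :
    pluckerT M u ≠ 0 := by
  obtain ⟨g, m, hg, hm, rfl⟩ := hM
  obtain ⟨ε, hε0, hε⟩ := exists_pluckerT_eq k (j := u)
    (fun a b e => hu.mono.injective (congrArg (spPos n) e))
  rw [hε, Matrix.submatrix_mul _ _ u id id Function.bijective_id, Matrix.det_mul,
    Matrix.det_of_isUpperTriangular]
  · refine mul_ne_zero hε0 (mul_ne_zero ?_ (by simpa using hm))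
    simp [hg.diag]
  · intro a b hab
    exact hg.tri _ _ (hu.mono hab)

/-! ### Linear independence -/

/-- A vanishing combination of monomials has no constant term: rescale one column by `s` and let
`s → 0`. -/
lemma const_eq_zero {k : Type*} [Field k] [Infinite k] {n d : ℕ} (hd : 1 ≤ d) {ι : Type*}
    (S : Finset ι) (w : ι → List (Fin d → Fin (2*n))) (hw : Set.InjOn w S) (c : ι → k)
    (hadm : ∀ a ∈ S, ∀ τ ∈ w a, SpAdm n τ)
    {u : Fin d → Fin (2*n)}
    (hvan : ∀ M ∈ spCell k u, ∑ a ∈ S, c a * stdMonL (w a) M = 0) (a : ι) (ha : a ∈ S)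
    (hnil : w a = []) : c a = 0 := by
  let j0 : Fin d := ⟨0, hd⟩
  let A : Matrix (Fin (2*n)) (Fin d) k := (1 : Matrix (Fin (2*n)) (Fin (2*n)) k).submatrix id u
  let D : k → Fin d → k := fun s j => if j = j0 then s else 1
  have h0 := (polyOnLines_sum S w c).at_zero (A * Matrix.diagonal (D 0))
    (A * Matrix.diagonal (fun j => if j = j0 then (1 : k) else 0)) (fun s hs => by
      rw [← Matrix.mul_smul, ← Matrix.mul_add]
      refine hvan _ ⟨1, _, isUnipSp_one, ?_, rfl⟩
      rw [← Matrix.diagonal_smul, Matrix.diagonal_add, Matrix.det_diagonal]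
      refine Finset.prod_ne_zero_iff.mpr fun j _ => ?_
      by_cases h : j = j0 <;> simp [D, h, hs])
  rw [Finset.sum_eq_single_of_mem a ha] at h0
  · simpa [hnil, stdMonL] using h0
  · intro b hb hba
    cases hL : w b with
    | nil => exact absurd (hw hb ha (hL.trans hnil.symm)) hba
    | cons τ L =>
      have hτ := hadm b hb τ (by rw [hL]; exact List.mem_cons_self)
      obtain ⟨ε, -, hε⟩ := exists_pluckerT_eq k (j := τ)
        (fun a b e => hτ.mono.injective (congrArg (spPos n) e))
      have : pluckerT (A * Matrix.diagonal (D 0)) τ = 0 := by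
        rw [hε, Matrix.submatrix_mul _ _ τ id id Function.bijective_id, Matrix.det_mul,
          Matrix.submatrix_id_id, Matrix.det_diagonal,
          Finset.prod_eq_zero (Finset.mem_univ j0) (by simp [D]), mul_zero, mul_zero]
      simp [stdMonL, this]

/-- Linear independence on a cell, by induction on a bound `N` for the degrees. Restricting to the
cell of a smallest leading factor `τ` kills all terms that do not start with `τ`; dividing the
remaining ones by `p_τ` lowers the degree. -/
lemma eq_empty_of_vanish {k : Type*} [Field k] [Infinite k] {n d : ℕ} (hd : 1 ≤ d) {ι : Type*}
    (c : ι → k) (N : ℕ) : ∀ (u : Fin d → Fin (2*n)) (S : Finset ι)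
      (w : ι → List (Fin d → Fin (2*n))), SpAdm n u → Set.InjOn w S → (∀ a ∈ S, c a ≠ 0) →
      (∀ a ∈ S, ∀ τ ∈ w a, SpAdm n τ) → (∀ a ∈ S, (u :: w a).IsChain (spGE n)) →
      (∀ a ∈ S, (w a).length ≤ N) →
      (∀ M ∈ spCell k u, ∑ a ∈ S, c a * stdMonL (w a) M = 0) → S = ∅ := by
  induction N with
  | zero =>
    intro u S w hu hinj hc hadm hch hlen hvan
    refine Finset.eq_empty_of_forall_notMem fun a ha => hc a ha ?_
    exact const_eq_zero hd S w hinj c hadm hvan a ha (List.length_eq_zero_iff.mp (by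
      have := hlen a ha; omega))
  | succ N ih =>
    intro u S w hu hinj hc hadm hch hlen hvan
    by_contra hS
    have hcons : ∀ a ∈ S, ∃ τ L, w a = τ :: L := by
      intro a ha
      cases hL : w a with
      | nil => exact absurd (const_eq_zero hd S w hinj c hadm hvan a ha hL) (hc a ha)
      | cons τ L => exact ⟨τ, L, rfl⟩
    obtain ⟨a0, ha0, hmin⟩ := Finset.exists_min_image S
      (fun a => ∑ t, spPos n ((w a).headD u t)) (Finset.nonempty_iff_ne_empty.mpr hS)
    obtain ⟨τ, L0, hτ⟩ := hcons a0 ha0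
    have hτadm : SpAdm n τ := hadm a0 ha0 τ (by rw [hτ]; exact List.mem_cons_self)
    have huτ : spGE n u τ := by
      have := hch a0 ha0
      rw [hτ] at this
      exact (List.isChain_cons_cons.mp this).1
    have hvanτ := vanish_le hτadm (polyOnLines_sum S w c) _ u hu rfl huτ hvan
    classical
    have hmem : ∀ a, a ∈ S.filter (fun a => (w a).head? = some τ) ↔
        a ∈ S ∧ w a = τ :: (w a).tail := by
      intro a
      rw [Finset.mem_filter]
      refine and_congr_right fun ha => ?_
      obtain ⟨τ', L, h⟩ := hcons a ha
      rw [h]; simp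
    have hempty := ih τ (S.filter fun a => (w a).head? = some τ) (fun a => (w a).tail) hτadm
      ?_ ?_ ?_ ?_ ?_ ?_
    · have : a0 ∈ S.filter (fun a => (w a).head? = some τ) :=
        (hmem a0).mpr ⟨ha0, by rw [hτ]; rfl⟩
      rw [hempty] at this
      exact absurd this (Finset.notMem_empty _)
    · intro a ha b hb hab
      have ha' := (hmem a).mp ha
      have hb' := (hmem b).mp hb
      apply hinj ha'.1 hb'.1
      dsimp only at hab
      rw [ha'.2, hb'.2, hab]
    · exact fun a ha => hc a ((hmem a).mp ha).1
    · exact fun a ha σ hσ => hadm a ((hmem a).mp ha).1 σ (List.mem_of_mem_tail hσ)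
    · intro a ha
      have ha' := (hmem a).mp ha
      have := hch a ha'.1
      rw [ha'.2] at this
      exact (List.isChain_cons_cons.mp this).2
    · intro a ha
      have := hlen a ((hmem a).mp ha).1
      rw [List.length_tail]
      omega
    · intro M hM
      have h1 := hvanτ M hM
      refine (mul_eq_zero.mp (?_ : pluckerT M τ * _ = 0)).resolve_left
        (pluckerT_self_ne_zero hτadm hM)
      refine Eq.trans ?_ h1
      rw [Finset.mul_sum, Finset.sum_filter]
      refine Finset.sum_congr rfl fun a ha => ?_
      obtain ⟨σ, L, hL⟩ := hcons a ha
      rw [hL]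
      by_cases hσ : σ = τ
      · subst hσ
        simp only [List.head?_cons, if_true, List.tail_cons, stdMonL, List.map_cons,
          List.prod_cons]
        ring
      · rw [List.head?_cons, if_neg (by simpa using hσ)]
        have hσadm : SpAdm n σ := hadm a ha σ (by rw [hL]; exact List.mem_cons_self)
        have hnot : ¬ spGE n τ σ := by
          rw [spGE_iff]
          intro hle
          have h2 := hmin a ha
          simp only [hτ, hL, List.headD_cons] at h2
          have h3 := (Finset.sum_eq_sum_iff_of_le fun t _ => hle t).mp
            (le_antisymm (Finset.sum_le_sum fun t _ => hle t) h2)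
          exact hσ (funext fun t => spPos_inj.mp (h3 t (Finset.mem_univ _)))
        simp [stdMonL, pluckerT_eq_zero hτadm hσadm hnot hM]

/-- let `u ≥^{Sp} v` in `I^{Sp}_{d,2n}` and let `F_1, …, F_r` be distinct
type C standard monomials on `R(u,v)`.  If `Σ c_a F_a(M) = 0` for every `2n×d` matrix `M`
of rank `d` whose column span lies in the Richardson variety `R(u,v)`, then
`Σ c_a F_a(M) = 0` for every `2n×d` matrix of rank `d`; equivalently all `c_a = 0`. -/
theorem stmt14 {k : Type*} [Field k] [IsAlgClosed k] (n d : ℕ) (hd1 : 1 ≤ d) (hdn : d ≤ n)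
    (u v : Fin d → Fin (2*n)) (hu : IsSpTuple n u) (hv : IsSpTuple n v) (huv : spGE n u v)
    (r : ℕ) (w : Fin r → List (Fin d → Fin (2*n)))
    (hw : ∀ a, IsStdOnR n u v (w a)) (hwinj : Function.Injective w)
    (c : Fin r → k)
    (hvanish : ∀ M : Matrix (Fin (2*n)) (Fin d) k, M.rank = d →
      inRich k n u v (LinearMap.range M.mulVecLin) →
      ∑ a : Fin r, c a * stdMonL (w a) M = 0) :
    (∀ M : Matrix (Fin (2*n)) (Fin d) k, M.rank = d →
      ∑ a : Fin r, c a * stdMonL (w a) M = 0) ∧ ∀ a, c a = 0 := by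
  classical
  have hzero : ∀ a, c a = 0 := by
    have := eq_empty_of_vanish hd1 c (∑ a, (w a).length) u (Finset.univ.filter fun a => c a ≠ 0) w
      hu.adm hwinj.injOn (fun a ha => (Finset.mem_filter.mp ha).2)
      (fun a _ τ hτ => ((hw a).2.1 τ hτ).adm)
      (fun a _ => by
        have := (hw a).2.2
        rw [← List.cons_append] at this
        exact this.left_of_append)
      (fun a _ => Finset.single_le_sum (f := fun a => (w a).length) (fun _ _ => Nat.zero_le _)
        (Finset.mem_univ a))
      (fun M hM => by
        obtain ⟨h1, h2⟩ := spCell_inRich hu.adm huv hM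
        refine Eq.trans ?_ (hvanish M h1 h2)
        rw [Finset.sum_filter]
        refine Finset.sum_congr rfl fun a _ => ?_
        by_cases h : c a = 0 <;> simp [h])
    intro a
    by_contra h
    have ha : a ∈ Finset.univ.filter fun a => c a ≠ 0 := by simpa using h
    rw [this] at ha
    exact absurd ha (Finset.notMem_empty _)
  exact ⟨fun M _ => by simp [hzero], hzero⟩
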